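/- arXiv:2104.02779 — 7 statements merged into one kernel-verified Lean document; each statement's English description precedes it below -/
import Mathlib

section
/- Let p be a prime number. Equip the multiplicative group ℚ_pˣ of the field ℚ_p of p-adic numbers with a Haar measure μ normalized so that μ(ℤ_pˣ) = 1; write v for the normalized p-adic valuation (v(p) = 1), |·|_p for the normalized absolute value (|p|_p = 1/p), and χ(t) = (-1)^{v(t)} for t ∈ ℚ_pˣ. Let c, ζ, u₁, u₂ ∈ ℚ_pˣ with u₁·u₂ = ζ, and set N := v(ζ) - v(c) ∈ ℤ. Then for every s ∈ ℝ one has χ(u₁)·|u₁|_p^{-s} · ∫_{ℚ_pˣ} 1_{ℤ_p}(u₁·t⁻¹) · 1_{c·ℤ_p}(t·u₂) · |t|_p^{s} · χ(t) dμ(t) = ∑_{m=0}^{N} (-1)^m · p^{m·s}, where the right-hand sum is interpreted as 0 when N < 0. In particular the left-hand side depends only on ζ = u₁·u₂ and not on the choice of (u₁, u₂). -/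
open MeasureTheory

/-- The normalized non-archimedean local orbital integral (with transfer factor)
for the test function `φ'_c = 1_{ℤ_p × c·ℤ_p}` on `ℚ_p × ℚ_p`, defined using a Haar
measure `μ` on `ℚ_pˣ`.  Here `χ(t) = (-1)^{v(t)}` is the quadratic character of the
unramified quadratic extension of `ℚ_p`. -/
noncomputable def padicOrb (p : ℕ) [Fact p.Prime] [MeasurableSpace ℚ_[p]ˣ]
    (μ : Measure ℚ_[p]ˣ) (c u₁ u₂ : ℚ_[p]ˣ) (s : ℝ) : ℝ :=
  (-1 : ℝ) ^ ((u₁ : ℚ_[p]).valuation) * ‖(u₁ : ℚ_[p])‖ ^ (-s) *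
    ∫ t : ℚ_[p]ˣ,
      (Set.indicator {x : ℚ_[p] | ‖x‖ ≤ 1} (fun _ => (1 : ℝ)) ((u₁ : ℚ_[p]) * ((t : ℚ_[p]))⁻¹)) *
      (Set.indicator {y : ℚ_[p] | ‖y‖ ≤ ‖(c : ℚ_[p])‖} (fun _ => (1 : ℝ))
        ((t : ℚ_[p]) * (u₂ : ℚ_[p]))) *
      ‖(t : ℚ_[p])‖ ^ s * (-1 : ℝ) ^ ((t : ℚ_[p]).valuation) ∂μ

/-!
Put `q = -(p ^ s)`. Since `χ` is quadratic, the transfer factor times `|t| ^ s * χ(t)` is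
`q ^ (v(u₁) - v(t))`, and the test function cuts out exactly the condition
`0 ≤ v(u₁) - v(t) ≤ N := v(u₁u₂) - v(c)`. The integrand therefore factors through the valuation,
which pushes the normalized Haar measure on `ℚ_pˣ` forward to the counting measure on `ℤ`; the
reflection `k ↦ v(u₁) - k` preserves the latter, so the integral is `∑_{k=0}^{N} q ^ k`.
-/

section InvariantMeasure

variable {G A : Type*} [Group G] [AddGroup A] {φ : G →* Multiplicative A}

theorem preimage_toAdd_comp_singleton_eq_preimage_ker (g : G) :
    (fun t => (φ t).toAdd) ⁻¹' {(φ g).toAdd} = (g⁻¹ * ·) ⁻¹' (φ.ker : Set G) := by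
  ext t
  simp [inv_mul_eq_one, eq_comm (a := φ t)]

variable [MeasurableSpace G] [MeasurableMul G] [Countable A] [MeasurableSpace A]

theorem measurable_toAdd_comp_of_measurableSet_ker (hker : MeasurableSet (φ.ker : Set G)) :
    Measurable fun t => (φ t).toAdd := by
  refine measurable_to_countable fun g => ?_
  rw [preimage_toAdd_comp_singleton_eq_preimage_ker]
  exact measurable_const_mul g⁻¹ hker

variable [MeasurableSingletonClass A] (μ : Measure G) [μ.IsMulLeftInvariant]

theorem map_toAdd_comp_eq_smul_count (hφ : Function.Surjective φ)
    (hker : MeasurableSet (φ.ker : Set G)) :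
    μ.map (fun t => (φ t).toAdd) = μ φ.ker • Measure.count := by
  refine Measure.ext_of_singleton fun a => ?_
  obtain ⟨g, hg⟩ := hφ (.ofAdd a)
  obtain rfl : (φ g).toAdd = a := by simp [hg]
  rw [Measure.map_apply (measurable_toAdd_comp_of_measurableSet_ker hker)
      (measurableSet_singleton _), preimage_toAdd_comp_singleton_eq_preimage_ker,
    measure_preimage_mul, Measure.smul_apply, Measure.count_singleton, smul_eq_mul, mul_one]

theorem integral_comp_sub_toAdd {E : Type*} [NormedAddCommGroup E] [NormedSpace ℝ E]
    (hφ : Function.Surjective φ) (hker : MeasurableSet (φ.ker : Set G)) (f : A → E) (a : A) :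
    ∫ t, f (a - (φ t).toAdd) ∂μ = μ.real φ.ker • ∫ k, f k ∂Measure.count := by
  have hv := measurable_toAdd_comp_of_measurableSet_ker hker
  rw [← integral_map (f := fun k => f (a - k)) hv.aemeasurable (by fun_prop),
    map_toAdd_comp_eq_smul_count μ hφ hker, integral_smul_measure, integral_sub_left_eq_self,
    measureReal_def]

end InvariantMeasure

theorem integral_indicator_finset_count {α E : Type*} [MeasurableSpace α]
    [MeasurableSingletonClass α] [NormedAddCommGroup E] [NormedSpace ℝ E] [CompleteSpace E]
    (S : Finset α) (f : α → E) :
    ∫ a, (S : Set α).indicator f a ∂Measure.count = ∑ a ∈ S, f a := by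
  have hf : IntegrableOn f S Measure.count := by
    rw [← (S : Set α).biUnion_of_singleton]
    simp [integrableOn_finset_iUnion]
  rw [integral_indicator S.measurableSet, setIntegral_finset S hf]
  simp [measureReal_def]

theorem sum_Icc_int_zero_eq_sum_range_toNat {M : Type*} [AddCommMonoid M] (n : ℤ) (f : ℤ → M) :
    ∑ k ∈ Finset.Icc 0 n, f k = ∑ m ∈ Finset.range (n + 1).toNat, f m := by
  simp [Int.Icc_eq_finset_map]

section Padic

/-- The normalized valuation of `ℚ_p` as a group homomorphism `ℚ_pˣ → ℤ`, with values
written multiplicatively; its kernel is `ℤ_pˣ`. -/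
noncomputable def padicUnitsValuation (p : ℕ) [Fact p.Prime] : ℚ_[p]ˣ →* Multiplicative ℤ :=
  .mk' (fun t => .ofAdd (t : ℚ_[p]).valuation) fun t u => by
    rw [Units.val_mul, Padic.valuation_mul t.ne_zero u.ne_zero, ofAdd_add]

variable {p : ℕ} [Fact p.Prime]

theorem toAdd_padicUnitsValuation (t : ℚ_[p]ˣ) :
    (padicUnitsValuation p t).toAdd = (t : ℚ_[p]).valuation :=
  rfl

theorem padicUnitsValuation_surjective : Function.Surjective (padicUnitsValuation p) := by
  have hp : (p : ℚ_[p]) ≠ 0 := mod_cast (Fact.out : p.Prime).ne_zero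
  intro k
  refine ⟨Units.mk0 (p : ℚ_[p]) hp ^ k.toAdd, ?_⟩
  simp [padicUnitsValuation]

theorem padic_norm_le_norm_iff_valuation_le {x y : ℚ_[p]} (hx : x ≠ 0) (hy : y ≠ 0) :
    ‖x‖ ≤ ‖y‖ ↔ y.valuation ≤ x.valuation := by
  have hp : 1 < (p : ℝ) := mod_cast (Fact.out : p.Prime).one_lt
  rw [Padic.norm_eq_zpow_neg_valuation hx, Padic.norm_eq_zpow_neg_valuation hy,
    zpow_le_zpow_iff_right₀ hp, neg_le_neg_iff]

theorem coe_ker_padicUnitsValuation :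
    ((padicUnitsValuation p).ker : Set ℚ_[p]ˣ) = {t : ℚ_[p]ˣ | ‖(t : ℚ_[p])‖ = 1} := by
  have hp : 1 < (p : ℝ) := mod_cast (Fact.out : p.Prime).one_lt
  ext t
  simp [padicUnitsValuation, Padic.norm_eq_zpow_neg_valuation t.ne_zero,
    zpow_eq_one_iff_right₀ (zero_le_one.trans hp.le) hp.ne']

theorem measurableSet_ker_padicUnitsValuation [MeasurableSpace ℚ_[p]ˣ] [BorelSpace ℚ_[p]ˣ] :
    MeasurableSet ((padicUnitsValuation p).ker : Set ℚ_[p]ˣ) := by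
  rw [coe_ker_padicUnitsValuation]
  exact (isClosed_eq (by fun_prop) continuous_const).measurableSet

theorem neg_one_zpow_valuation_mul_norm_rpow_neg {x : ℚ_[p]} (hx : x ≠ 0) (s : ℝ) :
    (-1 : ℝ) ^ x.valuation * ‖x‖ ^ (-s) = (-(p : ℝ) ^ s) ^ x.valuation := by
  have hnorm : ‖x‖ ^ (-s) = ((p : ℝ) ^ s) ^ x.valuation := by
    rw [Padic.norm_eq_zpow_neg_valuation hx, ← Real.rpow_intCast, ← Real.rpow_intCast,
      ← Real.rpow_mul p.cast_nonneg, ← Real.rpow_mul p.cast_nonneg, Int.cast_neg, neg_mul_neg,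
      mul_comm]
  rw [hnorm, ← mul_zpow, neg_one_mul]

theorem neg_one_zpow_valuation_mul_norm_rpow_neg_mul {x y : ℚ_[p]} (hx : x ≠ 0) (hy : y ≠ 0)
    (s : ℝ) :
    (-1 : ℝ) ^ x.valuation * ‖x‖ ^ (-s) * (‖y‖ ^ s * (-1 : ℝ) ^ y.valuation) =
      (-(p : ℝ) ^ s) ^ (x.valuation - y.valuation) := by
  have hq : -(p : ℝ) ^ s ≠ 0 :=
    neg_ne_zero.2 (Real.rpow_pos_of_pos (mod_cast (Fact.out : p.Prime).pos) s).ne'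
  have hinv : -(p : ℝ) ^ (-s) = (-(p : ℝ) ^ s)⁻¹ := by rw [Real.rpow_neg p.cast_nonneg, inv_neg]
  have hy' := neg_one_zpow_valuation_mul_norm_rpow_neg hy (-s)
  rw [neg_neg, hinv, inv_zpow'] at hy'
  rw [neg_one_zpow_valuation_mul_norm_rpow_neg hx, mul_comm (‖y‖ ^ s), hy', ← zpow_add₀ hq,
    sub_eq_add_neg]

theorem indicator_mul_indicator_eq_indicator_Icc_valuation (c u₁ u₂ t : ℚ_[p]ˣ) :
    {x : ℚ_[p] | ‖x‖ ≤ 1}.indicator (fun _ => (1 : ℝ)) ((u₁ : ℚ_[p]) * (t : ℚ_[p])⁻¹) *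
        {y : ℚ_[p] | ‖y‖ ≤ ‖(c : ℚ_[p])‖}.indicator (fun _ => (1 : ℝ)) ((t : ℚ_[p]) * u₂) =
      (Set.Icc 0 (((u₁ * u₂ : ℚ_[p]ˣ) : ℚ_[p]).valuation - (c : ℚ_[p]).valuation)).indicator 1
        ((u₁ : ℚ_[p]).valuation - (t : ℚ_[p]).valuation) := by
  have hfst : ‖(u₁ : ℚ_[p]) * (t : ℚ_[p])⁻¹‖ ≤ 1 ↔
      0 ≤ (u₁ : ℚ_[p]).valuation - (t : ℚ_[p]).valuation := by
    rw [Padic.norm_le_one_iff_val_nonneg,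
      Padic.valuation_mul u₁.ne_zero (inv_ne_zero t.ne_zero), Padic.valuation_inv, sub_eq_add_neg]
  have hsnd : ‖(t : ℚ_[p]) * u₂‖ ≤ ‖(c : ℚ_[p])‖ ↔
      (u₁ : ℚ_[p]).valuation - (t : ℚ_[p]).valuation ≤
        ((u₁ * u₂ : ℚ_[p]ˣ) : ℚ_[p]).valuation - (c : ℚ_[p]).valuation := by
    rw [padic_norm_le_norm_iff_valuation_le (mul_ne_zero t.ne_zero u₂.ne_zero) c.ne_zero,
      Units.val_mul, Padic.valuation_mul t.ne_zero u₂.ne_zero,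
      Padic.valuation_mul u₁.ne_zero u₂.ne_zero]
    lia
  simp only [Set.indicator_apply, Set.mem_ofPred_eq, Set.mem_Icc, hfst, hsnd,
    ite_zero_mul_ite_zero, Pi.one_apply, mul_one]

theorem padicOrb_eq_integral_indicator [MeasurableSpace ℚ_[p]ˣ] (μ : Measure ℚ_[p]ˣ)
    (c u₁ u₂ : ℚ_[p]ˣ) (s : ℝ) :
    padicOrb p μ c u₁ u₂ s =
      ∫ t : ℚ_[p]ˣ,
        (Set.Icc 0 (((u₁ * u₂ : ℚ_[p]ˣ) : ℚ_[p]).valuation - (c : ℚ_[p]).valuation)).indicator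
          (fun k => (-(p : ℝ) ^ s) ^ k) ((u₁ : ℚ_[p]).valuation - (t : ℚ_[p]).valuation) ∂μ := by
  rw [padicOrb, ← integral_const_mul]
  congr with t
  rw [indicator_mul_indicator_eq_indicator_Icc_valuation, mul_assoc (Set.indicator _ _ _),
    mul_left_comm, neg_one_zpow_valuation_mul_norm_rpow_neg_mul u₁.ne_zero t.ne_zero,
    ← Set.indicator_mul_left]
  simp only [Pi.one_apply, one_mul]

end Padic

/-- For any Haar measure on `ℚ_pˣ` normalized by `μ(ℤ_pˣ) = 1`, the normalized local
orbital integral of `φ'_c = 1_{ℤ_p × c·ℤ_p}` equals the alternating sum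
`∑_{m=0}^{N} (-1)^m p^{ms}` with `N = v(ζ) - v(c)` (the empty sum if `N < 0`);
in particular it depends only on `ζ = u₁u₂`. -/
theorem stmt1 (p : ℕ) [Fact p.Prime]
    [MeasurableSpace ℚ_[p]ˣ] [BorelSpace ℚ_[p]ˣ]
    (μ : Measure ℚ_[p]ˣ) [μ.IsHaarMeasure]
    (hμ : μ {t : ℚ_[p]ˣ | ‖(t : ℚ_[p])‖ = 1} = 1)
    (c ζ u₁ u₂ : ℚ_[p]ˣ) (hu : u₁ * u₂ = ζ) (s : ℝ) :
    padicOrb p μ c u₁ u₂ s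
      = ∑ m ∈ Finset.range ((ζ : ℚ_[p]).valuation - (c : ℚ_[p]).valuation + 1).toNat,
          (-1 : ℝ) ^ m * (p : ℝ) ^ ((m : ℝ) * s) := by
  have hker : μ.real (padicUnitsValuation p).ker = 1 := by
    rw [coe_ker_padicUnitsValuation, measureReal_def, hμ, ENNReal.toReal_one]
  set N := (ζ : ℚ_[p]).valuation - (c : ℚ_[p]).valuation
  calc
    padicOrb p μ c u₁ u₂ s
      = ∫ t : ℚ_[p]ˣ, (Set.Icc 0 N).indicator (fun k => (-(p : ℝ) ^ s) ^ k)
          ((u₁ : ℚ_[p]).valuation - (padicUnitsValuation p t).toAdd) ∂μ := by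
        simp only [padicOrb_eq_integral_indicator, hu, toAdd_padicUnitsValuation, N]
    _ = ∫ k, (Set.Icc 0 N).indicator (fun k => (-(p : ℝ) ^ s) ^ k) k ∂Measure.count := by
        rw [integral_comp_sub_toAdd μ padicUnitsValuation_surjective
          measurableSet_ker_padicUnitsValuation, hker, one_smul]
    _ = ∑ m ∈ Finset.range (N + 1).toNat, (-(p : ℝ) ^ s) ^ (m : ℤ) := by
        rw [← Finset.coe_Icc, integral_indicator_finset_count, sum_Icc_int_zero_eq_sum_range_toNat]
    _ = ∑ m ∈ Finset.range (N + 1).toNat, (-1 : ℝ) ^ m * (p : ℝ) ^ ((m : ℝ) * s) := by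
        refine Finset.sum_congr rfl fun m _ => ?_
        rw [zpow_natCast, neg_pow, mul_comm (m : ℝ), Real.rpow_mul_natCast p.cast_nonneg]
end

section
/- Define φ' : ℝ × ℝ → ℝ by φ'(x, y) = ((x + y)/2)·e^{-π(x² + y²)}. Let ζ ∈ ℝ with ζ ≠ 0 and choose u₁, u₂ ∈ ℝ, both nonzero, with u₁·u₂ = ζ. For s ∈ ℝ define Orb(ζ, φ', s) := sgn(u₁)·|u₁|^{-s} · ∫_{ℝ∖{0}} φ'(u₁·t⁻¹, t·u₂) · |t|^{s-1} · sgn(t) dt, the integral taken with respect to Lebesgue measure (this is the integral over ℝˣ against the multiplicative Haar measure dt/|t|, twisted by the sign character). Then Orb(ζ, φ', 0) = e^{-2πζ} if ζ > 0, and Orb(ζ, φ', 0) = 0 if ζ < 0; in particular the value is independent of the choice of (u₁, u₂) with u₁u₂ = ζ. -/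
open MeasureTheory

/-- The archimedean Gaussian test function `φ'(x,y) = ((x+y)/2)·e^{-π(x²+y²)}`
on the split quadratic space `ℝ × ℝ`. -/
noncomputable def gaussianTestFn (x y : ℝ) : ℝ :=
  ((x + y) / 2) * Real.exp (-(Real.pi * (x ^ 2 + y ^ 2)))

/-- The normalized archimedean local orbital integral (with transfer factor
`sgn(u₁)·|u₁|^{-s}`), evaluated at the identity of `SL₂(ℝ)`: the integral over
`ℝ∖{0}` against the multiplicative Haar measure `dt/|t|` twisted by the sign
character, written with respect to Lebesgue measure. -/
noncomputable def archOrb (u₁ u₂ s : ℝ) : ℝ :=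
  Real.sign u₁ * |u₁| ^ (-s) *
    ∫ t in ({0}ᶜ : Set ℝ),
      gaussianTestFn (u₁ * t⁻¹) (t * u₂) * |t| ^ (s - 1) * Real.sign t

/-!
The test function is symmetric, so the substitution `t ↦ u₁ / (u₂ t)`, which preserves the
multiplicative Haar measure, yields a functional equation `s ↔ -s` of sign `sgn (u₁ u₂)`; at `s = 0`
this forces vanishing when `u₁ u₂ < 0`. When `u₁ u₂ > 0`, completing the square in the exponent
splits off `e^{-2π u₁ u₂}` and leaves a Gaussian of `u₂ t - u₁ / t`, which the Cauchy–Schlömilch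
substitution `x = t - u₁ / (u₂ t)`, a bijection from `(0, ∞)` onto `ℝ`, turns into the Gaussian
integral.
-/

open Set

theorem hasDerivAt_const_div {𝕜 : Type*} [NontriviallyNormedField 𝕜] (c : 𝕜) {t : 𝕜}
    (ht : t ≠ 0) : HasDerivAt (fun x => c / x) (-(c / t ^ 2)) t := by
  simpa only [div_eq_mul_inv, mul_neg] using (hasDerivAt_inv ht).const_mul c

theorem image_const_div_compl_zero {G₀ : Type*} [CommGroupWithZero G₀] {c : G₀} (hc : c ≠ 0) :
    (fun t : G₀ => c / t) '' {0}ᶜ = {0}ᶜ := by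
  ext x
  constructor
  · rintro ⟨t, ht, rfl⟩
    exact div_ne_zero hc ht
  · exact fun hx => ⟨c / x, div_ne_zero hc hx, div_div_cancel₀ hc⟩

section ChangeOfVariables

variable {E : Type*} [NormedAddCommGroup E] [NormedSpace ℝ E] {c : ℝ}

theorem integral_compl_zero_inv_abs_smul_comp_const_div (hc : c ≠ 0) (f : ℝ → E) :
    ∫ t in ({0}ᶜ : Set ℝ), |t|⁻¹ • f (c / t) = ∫ t in ({0}ᶜ : Set ℝ), |t|⁻¹ • f t := by
  have hmeas : MeasurableSet ({0}ᶜ : Set ℝ) := (measurableSet_singleton 0).compl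
  have hderiv : ∀ t ∈ ({0}ᶜ : Set ℝ), HasDerivWithinAt (fun t => c / t) (-(c / t ^ 2)) {0}ᶜ t :=
    fun t ht => (hasDerivAt_const_div c ht).hasDerivWithinAt
  have hinj : InjOn (fun t : ℝ => c / t) {0}ᶜ := fun x _ y _ h => by
    simpa [div_eq_mul_inv, hc] using h
  have hsubst := integral_image_eq_integral_abs_deriv_smul hmeas hderiv hinj fun t => |t|⁻¹ • f t
  rw [image_const_div_compl_zero hc] at hsubst
  rw [hsubst]
  refine setIntegral_congr_fun hmeas fun t ht => ?_
  have ht_abs : |t| ≠ 0 := abs_ne_zero.2 ht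
  have hc_abs : |c| ≠ 0 := abs_ne_zero.2 hc
  simp only [smul_smul, abs_neg, abs_div, abs_pow]
  congr 1
  field_simp

theorem injOn_sub_const_div_Ioi (hc : 0 ≤ c) : InjOn (fun t : ℝ => t - c / t) (Ioi 0) := by
  refine StrictMonoOn.injOn fun x hx y _ hxy => ?_
  have hdiv : c / y ≤ c / x := div_le_div_of_nonneg_left hc hx hxy.le
  exact (sub_lt_sub_right hxy _).trans_le (sub_le_sub_left hdiv _)

theorem image_sub_const_div_Ioi (hc : 0 < c) : (fun t : ℝ => t - c / t) '' Ioi 0 = univ := by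
  refine eq_univ_of_forall fun x => ?_
  have hsq : √(x ^ 2 + 4 * c) ^ 2 = x ^ 2 + 4 * c := Real.sq_sqrt (by positivity)
  have hlt : |x| < √(x ^ 2 + 4 * c) := Real.lt_sqrt_of_sq_lt (by rw [sq_abs]; linarith)
  have hroot : 0 < (x + √(x ^ 2 + 4 * c)) / 2 := by linarith [neg_abs_le x]
  refine ⟨(x + √(x ^ 2 + 4 * c)) / 2, hroot, ?_⟩
  rw [sub_eq_iff_eq_add, ← sub_eq_iff_eq_add', eq_div_iff hroot.ne']
  linear_combination hsq / 4

theorem integral_Ioi_one_add_div_sq_smul_comp_sub_const_div (hc : 0 < c) (g : ℝ → E) :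
    ∫ t in Ioi 0, (1 + c / t ^ 2) • g (t - c / t) = ∫ x, g x := by
  have hderiv : ∀ t ∈ Ioi (0 : ℝ),
      HasDerivWithinAt (fun t => t - c / t) (1 + c / t ^ 2) (Ioi 0) t := fun t ht => by
    simpa only [sub_neg_eq_add] using
      ((hasDerivAt_id' t).fun_sub (hasDerivAt_const_div c (ne_of_gt ht))).hasDerivWithinAt
  have hsubst := integral_image_eq_integral_abs_deriv_smul measurableSet_Ioi hderiv
    (injOn_sub_const_div_Ioi hc.le) g
  rw [image_sub_const_div_Ioi hc, setIntegral_univ] at hsubst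
  rw [hsubst]
  refine setIntegral_congr_fun measurableSet_Ioi fun t _ => ?_
  have hpos : 0 ≤ 1 + c / t ^ 2 := by positivity
  simp only [abs_of_nonneg hpos]

end ChangeOfVariables

theorem integral_compl_zero_of_even {f : ℝ → ℝ} (hf : f.Even) :
    ∫ t in ({0}ᶜ : Set ℝ), f t = 2 * ∫ t in Ioi 0, f t := by
  have habs : ∀ t, f |t| = f t := fun t => by
    rcases abs_choice t with h | h <;> rw [h]
    exact hf t
  rw [restrict_compl_singleton, ← integral_comp_abs]
  simp only [habs]

theorem real_sign_eq_div_abs (x : ℝ) : Real.sign x = x / |x| := by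
  rcases lt_trichotomy x 0 with h | rfl | h
  · rw [Real.sign_of_neg h, abs_of_neg h, div_neg, div_self h.ne]
  · simp
  · rw [Real.sign_of_pos h, abs_of_pos h, div_self h.ne']

theorem real_sign_mul (x y : ℝ) : Real.sign (x * y) = Real.sign x * Real.sign y := by
  simp only [real_sign_eq_div_abs, abs_mul, mul_div_mul_comm]

theorem real_sign_div (x y : ℝ) : Real.sign (x / y) = Real.sign x * Real.sign y := by
  rw [div_eq_mul_inv, real_sign_mul, Real.sign_inv]

theorem gaussianTestFn_comm (x y : ℝ) : gaussianTestFn x y = gaussianTestFn y x := by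
  simp only [gaussianTestFn, add_comm]

theorem gaussianTestFn_neg_neg (x y : ℝ) : gaussianTestFn (-x) (-y) = -gaussianTestFn x y := by
  simp only [gaussianTestFn, neg_sq]
  ring

theorem gaussianTestFn_eq_exp_mul_exp_sub_sq (x y : ℝ) :
    gaussianTestFn x y = (x + y) / 2 *
      (Real.exp (-(2 * Real.pi * (x * y))) * Real.exp (-Real.pi * (y - x) ^ 2)) := by
  rw [gaussianTestFn, ← Real.exp_add]
  ring_nf

/-- The integrand of `archOrb u₁ u₂ s` with respect to the multiplicative Haar measure `dt/|t|`. -/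
noncomputable def archOrbIntegrand (u₁ u₂ s t : ℝ) : ℝ :=
  gaussianTestFn (u₁ * t⁻¹) (t * u₂) * |t| ^ s * Real.sign t

theorem archOrb_eq_integral_archOrbIntegrand (u₁ u₂ s : ℝ) :
    archOrb u₁ u₂ s =
      Real.sign u₁ * |u₁| ^ (-s) * ∫ t in ({0}ᶜ : Set ℝ), |t|⁻¹ • archOrbIntegrand u₁ u₂ s t := by
  rw [archOrb]
  congr 1
  refine setIntegral_congr_fun (measurableSet_singleton 0).compl fun t ht => ?_
  simp only [archOrbIntegrand, Real.rpow_sub_one (abs_ne_zero.2 ht), smul_eq_mul]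
  ring

theorem archOrbIntegrand_neg (u₁ u₂ s t : ℝ) :
    archOrbIntegrand u₁ u₂ s (-t) = archOrbIntegrand u₁ u₂ s t := by
  simp only [archOrbIntegrand, inv_neg, mul_neg, neg_mul, gaussianTestFn_neg_neg, abs_neg,
    Real.sign_neg, neg_neg]

theorem archOrbIntegrand_div_div {u₁ u₂ : ℝ} (hu₁ : u₁ ≠ 0) (hu₂ : u₂ ≠ 0) (s t : ℝ) :
    archOrbIntegrand u₁ u₂ s (u₁ / u₂ / t) =
      Real.sign (u₁ / u₂) * |u₁ / u₂| ^ s * archOrbIntegrand u₁ u₂ (-s) t := by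
  have hx : u₁ * (u₁ / u₂ / t)⁻¹ = t * u₂ := by field_simp
  have hy : u₁ / u₂ / t * u₂ = u₁ * t⁻¹ := by field_simp
  rw [archOrbIntegrand, hx, hy, gaussianTestFn_comm, abs_div _ t, real_sign_div _ t,
    Real.div_rpow (abs_nonneg _) (abs_nonneg _), archOrbIntegrand, Real.rpow_neg (abs_nonneg _)]
  ring

theorem integral_inv_abs_smul_archOrbIntegrand_eq_neg {u₁ u₂ : ℝ} (hu₁ : u₁ ≠ 0) (hu₂ : u₂ ≠ 0)
    (s : ℝ) :
    ∫ t in ({0}ᶜ : Set ℝ), |t|⁻¹ • archOrbIntegrand u₁ u₂ s t =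
      Real.sign (u₁ / u₂) * |u₁ / u₂| ^ s *
        ∫ t in ({0}ᶜ : Set ℝ), |t|⁻¹ • archOrbIntegrand u₁ u₂ (-s) t := by
  rw [← integral_compl_zero_inv_abs_smul_comp_const_div (div_ne_zero hu₁ hu₂),
    ← integral_const_mul]
  simp only [archOrbIntegrand_div_div hu₁ hu₂, smul_eq_mul, mul_left_comm]

theorem archOrb_eq_sign_mul_archOrb_neg {u₁ u₂ : ℝ} (hu₁ : u₁ ≠ 0) (hu₂ : u₂ ≠ 0) (s : ℝ) :
    archOrb u₁ u₂ s = Real.sign (u₁ * u₂) * |u₁ * u₂| ^ (-s) * archOrb u₁ u₂ (-s) := by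
  have hu₁_rpow : |u₁| ^ s ≠ 0 := (Real.rpow_pos_of_pos (abs_pos.2 hu₁) s).ne'
  rw [archOrb_eq_integral_archOrbIntegrand, archOrb_eq_integral_archOrbIntegrand,
    integral_inv_abs_smul_archOrbIntegrand_eq_neg hu₁ hu₂, real_sign_mul, real_sign_div, abs_mul,
    abs_div, Real.mul_rpow (abs_nonneg _) (abs_nonneg _),
    Real.div_rpow (abs_nonneg _) (abs_nonneg _), neg_neg, Real.rpow_neg (abs_nonneg _),
    Real.rpow_neg (abs_nonneg _)]
  field_simp

theorem archOrb_zero_of_mul_neg {u₁ u₂ : ℝ} (h : u₁ * u₂ < 0) : archOrb u₁ u₂ 0 = 0 := by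
  have hfun := archOrb_eq_sign_mul_archOrb_neg (left_ne_zero_of_mul h.ne)
    (right_ne_zero_of_mul h.ne) 0
  rw [Real.sign_of_neg h, neg_zero, Real.rpow_zero] at hfun
  linarith

theorem inv_abs_smul_archOrbIntegrand_zero {u₁ u₂ t : ℝ} (hu₂ : u₂ ≠ 0) (ht : 0 < t) :
    |t|⁻¹ • archOrbIntegrand u₁ u₂ 0 t =
      u₂ / 2 * Real.exp (-(2 * Real.pi * (u₁ * u₂))) *
        ((1 + u₁ / u₂ / t ^ 2) • Real.exp (-(Real.pi * u₂ ^ 2) * (t - u₁ / u₂ / t) ^ 2)) := by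
  have hmul : u₁ * t⁻¹ * (t * u₂) = u₁ * u₂ := by field_simp
  have hsq : -Real.pi * (t * u₂ - u₁ * t⁻¹) ^ 2 =
      -(Real.pi * u₂ ^ 2) * (t - u₁ / u₂ / t) ^ 2 := by field_simp
  rw [archOrbIntegrand, gaussianTestFn_eq_exp_mul_exp_sub_sq, hmul, hsq, Real.rpow_zero,
    Real.sign_of_pos ht, abs_of_pos ht, smul_eq_mul, smul_eq_mul]
  field_simp
  ring

theorem integral_inv_abs_smul_archOrbIntegrand_zero {u₁ u₂ : ℝ} (h : 0 < u₁ * u₂) :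
    ∫ t in ({0}ᶜ : Set ℝ), |t|⁻¹ • archOrbIntegrand u₁ u₂ 0 t =
      Real.sign u₂ * Real.exp (-(2 * Real.pi * (u₁ * u₂))) := by
  have hu₂ : u₂ ≠ 0 := right_ne_zero_of_mul h.ne'
  have hc : 0 < u₁ / u₂ := div_pos_iff.2 (mul_pos_iff.1 h)
  have heven : Function.Even fun t => |t|⁻¹ • archOrbIntegrand u₁ u₂ 0 t := fun t => by
    simp only [abs_neg, archOrbIntegrand_neg]
  have hgauss : √(Real.pi / (Real.pi * u₂ ^ 2)) = |u₂|⁻¹ := by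
    rw [div_mul_cancel_left₀ Real.pi_ne_zero, Real.sqrt_inv, Real.sqrt_sq_eq_abs]
  rw [integral_compl_zero_of_even heven, setIntegral_congr_fun measurableSet_Ioi
      fun t ht => inv_abs_smul_archOrbIntegrand_zero hu₂ ht,
    integral_const_mul, integral_Ioi_one_add_div_sq_smul_comp_sub_const_div hc
      fun x => Real.exp (-(Real.pi * u₂ ^ 2) * x ^ 2),
    integral_gaussian, hgauss, real_sign_eq_div_abs]
  ring

theorem archOrb_zero_of_mul_pos {u₁ u₂ : ℝ} (h : 0 < u₁ * u₂) :
    archOrb u₁ u₂ 0 = Real.exp (-(2 * Real.pi * (u₁ * u₂))) := by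
  rw [archOrb_eq_integral_archOrbIntegrand, integral_inv_abs_smul_archOrbIntegrand_zero h,
    neg_zero, Real.rpow_zero, mul_one, ← mul_assoc, ← real_sign_mul, Real.sign_of_pos h, one_mul]

/-- Value at `s = 0` of the archimedean orbital integral: `e^{-2πζ}` for `ζ > 0`
and `0` for `ζ < 0`; in particular it depends only on `ζ = u₁u₂`. -/
theorem stmt4 (ζ u₁ u₂ : ℝ) (hu₁ : u₁ ≠ 0) (hu₂ : u₂ ≠ 0) (hu : u₁ * u₂ = ζ) :
    (0 < ζ → archOrb u₁ u₂ 0 = Real.exp (-(2 * Real.pi * ζ))) ∧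
    (ζ < 0 → archOrb u₁ u₂ 0 = 0) := by
  subst hu
  exact ⟨archOrb_zero_of_mul_pos, archOrb_zero_of_mul_neg⟩
end

section
/- For every real β > 0, the improper integral ∫_0^∞ (t⁻² - β)·e^{-π(t⁻² + β²·t²)} dt converges and equals 0. -/
open MeasureTheory

/-! The substitution `t ↦ (β * t)⁻¹` is an involution of the positive half-line which carries
`f t dt` to `β⁻¹ t⁻² f ((β * t)⁻¹) dt`. So if `f` is invariant under it, then `t⁻² f t` is
integrable together with `f t` and its integral is `β` times that of `f`. The exponential factor
is invariant because the substitution exchanges `t⁻²` and `β² t²`. -/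

theorem rpow_neg_one_sub_one (t : ℝ) : t ^ (-1 - 1 : ℝ) = t⁻¹ ^ 2 := by
  rw [inv_pow, ← zpow_natCast, ← zpow_neg, ← Real.rpow_intCast]
  norm_num

section InvMulSubstitution

variable {E : Type*} [NormedAddCommGroup E] [NormedSpace ℝ E] {β : ℝ}

theorem integrableOn_Ioi_inv_sq_smul_comp_mul_inv_iff (f : ℝ → E) (hβ : 0 < β) :
    IntegrableOn (fun t : ℝ => t⁻¹ ^ 2 • f (β * t)⁻¹) (Set.Ioi 0) ↔
      IntegrableOn f (Set.Ioi 0) := by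
  calc
    IntegrableOn (fun t : ℝ => t⁻¹ ^ 2 • f (β * t)⁻¹) (Set.Ioi 0)
        ↔ IntegrableOn (fun t : ℝ => t ^ (-1 - 1 : ℝ) • f (β⁻¹ * t ^ (-1 : ℝ))) (Set.Ioi 0) := by
      simp only [rpow_neg_one_sub_one, Real.rpow_neg_one, mul_inv]
    _ ↔ IntegrableOn (fun t : ℝ => f (β⁻¹ * t)) (Set.Ioi 0) :=
      integrableOn_Ioi_comp_rpow_iff' (fun t => f (β⁻¹ * t)) (neg_ne_zero.mpr one_ne_zero)
    _ ↔ IntegrableOn f (Set.Ioi 0) := by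
      rw [integrableOn_Ioi_comp_mul_left_iff f 0 (inv_pos.mpr hβ), mul_zero]

theorem integral_Ioi_inv_sq_smul_comp_mul_inv (f : ℝ → E) (hβ : 0 < β) :
    ∫ t in Set.Ioi (0 : ℝ), t⁻¹ ^ 2 • f (β * t)⁻¹ = β • ∫ t in Set.Ioi (0 : ℝ), f t := by
  calc
    ∫ t in Set.Ioi (0 : ℝ), t⁻¹ ^ 2 • f (β * t)⁻¹
        = ∫ t in Set.Ioi (0 : ℝ), (|(-1 : ℝ)| * t ^ (-1 - 1 : ℝ)) • f (β⁻¹ * t ^ (-1 : ℝ)) := by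
      simp only [rpow_neg_one_sub_one, Real.rpow_neg_one, mul_inv, abs_neg, abs_one, one_mul]
    _ = ∫ t in Set.Ioi (0 : ℝ), f (β⁻¹ * t) :=
      integral_comp_rpow_Ioi (fun t => f (β⁻¹ * t)) (neg_ne_zero.mpr one_ne_zero)
    _ = β • ∫ t in Set.Ioi (0 : ℝ), f t := by
      rw [integral_comp_mul_left_Ioi f 0 (inv_pos.mpr hβ), inv_inv, mul_zero]

theorem integrableOn_Ioi_inv_sq_smul_of_comp_mul_inv_eq {f : ℝ → E} (hβ : 0 < β)
    (hf : IntegrableOn f (Set.Ioi 0)) (hinv : ∀ t ∈ Set.Ioi (0 : ℝ), f (β * t)⁻¹ = f t) :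
    IntegrableOn (fun t : ℝ => t⁻¹ ^ 2 • f t) (Set.Ioi 0) :=
  ((integrableOn_Ioi_inv_sq_smul_comp_mul_inv_iff f hβ).mpr hf).congr_fun
    (fun t ht => congrArg (t⁻¹ ^ 2 • ·) (hinv t ht)) measurableSet_Ioi

theorem integral_Ioi_inv_sq_smul_of_comp_mul_inv_eq {f : ℝ → E} (hβ : 0 < β)
    (hinv : ∀ t ∈ Set.Ioi (0 : ℝ), f (β * t)⁻¹ = f t) :
    ∫ t in Set.Ioi (0 : ℝ), t⁻¹ ^ 2 • f t = β • ∫ t in Set.Ioi (0 : ℝ), f t := by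
  rw [← integral_Ioi_inv_sq_smul_comp_mul_inv f hβ]
  exact setIntegral_congr_fun measurableSet_Ioi fun t ht =>
    congrArg (t⁻¹ ^ 2 • ·) (hinv t ht).symm

theorem integrableOn_Ioi_inv_sq_sub_smul_of_comp_mul_inv_eq {f : ℝ → E} (hβ : 0 < β)
    (hf : IntegrableOn f (Set.Ioi 0)) (hinv : ∀ t ∈ Set.Ioi (0 : ℝ), f (β * t)⁻¹ = f t) :
    IntegrableOn (fun t : ℝ => (t⁻¹ ^ 2 - β) • f t) (Set.Ioi 0) := by
  simp only [sub_smul]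
  exact (integrableOn_Ioi_inv_sq_smul_of_comp_mul_inv_eq hβ hf hinv).sub (hf.smul β)

theorem integral_Ioi_inv_sq_sub_smul_eq_zero_of_comp_mul_inv_eq {f : ℝ → E} (hβ : 0 < β)
    (hf : IntegrableOn f (Set.Ioi 0)) (hinv : ∀ t ∈ Set.Ioi (0 : ℝ), f (β * t)⁻¹ = f t) :
    ∫ t in Set.Ioi (0 : ℝ), (t⁻¹ ^ 2 - β) • f t = 0 := by
  calc
    ∫ t in Set.Ioi (0 : ℝ), (t⁻¹ ^ 2 - β) • f t
        = (∫ t in Set.Ioi (0 : ℝ), t⁻¹ ^ 2 • f t) - ∫ t in Set.Ioi (0 : ℝ), β • f t := by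
      simp only [sub_smul]
      exact integral_sub (integrableOn_Ioi_inv_sq_smul_of_comp_mul_inv_eq hβ hf hinv) (hf.smul β)
    _ = 0 := by
      rw [integral_Ioi_inv_sq_smul_of_comp_mul_inv_eq hβ hinv, integral_smul, sub_self]

end InvMulSubstitution

theorem integrable_exp_neg_mul_inv_sq_add_mul_sq {a b : ℝ} (ha : 0 ≤ a) (hb : 0 < b) :
    Integrable fun t : ℝ => Real.exp (-(a * t⁻¹ ^ 2 + b * t ^ 2)) := by
  refine (integrable_exp_neg_mul_sq hb).mono' (by fun_prop) (.of_forall fun t => ?_)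
  have hinv_sq : 0 ≤ a * t⁻¹ ^ 2 := by positivity
  rw [Real.norm_eq_abs, Real.abs_exp]
  gcongr
  linarith

theorem inv_sq_add_sq_mul_sq_mul_inv {K : Type*} [Semifield K] {β : K} (hβ : β ≠ 0) (t : K) :
    (β * t)⁻¹⁻¹ ^ 2 + β ^ 2 * (β * t)⁻¹ ^ 2 = t⁻¹ ^ 2 + β ^ 2 * t ^ 2 := by
  rw [inv_inv, ← mul_pow, ← mul_pow, mul_inv, mul_inv_cancel_left₀ hβ, add_comm]

/-- For `β > 0`, the integral `∫_0^∞ (t⁻² - β)·e^{-π(t⁻² + β²t²)} dt` converges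
and vanishes. -/
theorem stmt7 (β : ℝ) (hβ : 0 < β) :
    IntegrableOn
      (fun t : ℝ => (t⁻¹ ^ 2 - β) * Real.exp (-(Real.pi * (t⁻¹ ^ 2 + β ^ 2 * t ^ 2))))
      (Set.Ioi 0) ∧
    (∫ t in Set.Ioi (0 : ℝ),
        (t⁻¹ ^ 2 - β) * Real.exp (-(Real.pi * (t⁻¹ ^ 2 + β ^ 2 * t ^ 2)))) = 0 := by
  have hint : Integrable fun t : ℝ => Real.exp (-(Real.pi * (t⁻¹ ^ 2 + β ^ 2 * t ^ 2))) := by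
    simpa only [mul_add, ← mul_assoc] using
      integrable_exp_neg_mul_inv_sq_add_mul_sq Real.pi_nonneg (mul_pos Real.pi_pos (pow_pos hβ 2))
  have hinv : ∀ t ∈ Set.Ioi (0 : ℝ),
      Real.exp (-(Real.pi * ((β * t)⁻¹⁻¹ ^ 2 + β ^ 2 * (β * t)⁻¹ ^ 2))) =
        Real.exp (-(Real.pi * (t⁻¹ ^ 2 + β ^ 2 * t ^ 2))) := fun t _ => by
    rw [inv_sq_add_sq_mul_sq_mul_inv hβ.ne']
  exact ⟨integrableOn_Ioi_inv_sq_sub_smul_of_comp_mul_inv_eq hβ hint.integrableOn hinv,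
    integral_Ioi_inv_sq_sub_smul_eq_zero_of_comp_mul_inv_eq hβ hint.integrableOn hinv⟩
end

section
/- Let a > 0 and α, s₀ ∈ ℝ. For R > 0 define g(R) = Ei(-2πaR) = -∫_{2πaR}^∞ e^{-t}/t dt. Then g is twice differentiable on (0, ∞) and for every R > 0 one has R·(α + R)·g''(R) + (α + (s₀ + 1)·R)·g'(R) = (s₀ - 2πa·(α + R))·e^{-2πaR}. -/
open MeasureTheory

/-- `g(R) = Ei(-2πaR) = -∫_{2πaR}^∞ e^{-t}/t dt`, the radial profile of
Kudla's Green function. -/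
noncomputable def kudlaG (a R : ℝ) : ℝ :=
  -(∫ t in Set.Ioi (2 * Real.pi * a * R), Real.exp (-t) / t)

/-!
Write `c = 2πa` and `g = kudlaG a`. By the fundamental theorem of calculus `g' = e^{-cR}/R`, whose
logarithmic derivative gives `R g'' = -(1 + cR) g'`. Substituting this for `g''`, the terms
`-(α + R)` and `α + (s₀ + 1)R` combine to `s₀ R`, so the left-hand side becomes
`(s₀ - c(α + R)) · R g'`, and `R g' = e^{-cR}`.
-/

open Set Topology

lemma hasDerivAt_integral_Ioi {E : Type*} [NormedAddCommGroup E] [NormedSpace ℝ E]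
    [CompleteSpace E] {f : ℝ → E} {b x : ℝ} (hbx : b < x) (hint : IntegrableOn f (Ioi b))
    (hcont : ContinuousAt f x) : HasDerivAt (fun y ↦ ∫ t in Ioi y, f t) (-f x) x := by
  have hmeas : StronglyMeasurableAtFilter f (𝓝 x) :=
    ⟨Ioi b, Ioi_mem_nhds hbx, hint.aestronglyMeasurable⟩
  have htail {y : ℝ} (hy : b < y) : IntegrableOn f (Ioi y) :=
    hint.mono_set (Ioi_subset_Ioi hy.le)
  have hderiv := (intervalIntegral.integral_hasDerivAt_right
    (IntervalIntegrable.refl (a := x)) hmeas hcont).const_sub (∫ t in Ioi x, f t)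
  refine hderiv.congr_of_eventuallyEq ?_
  filter_upwards [Ioi_mem_nhds hbx] with y hy
  rw [← intervalIntegral.integral_Ioi_sub_Ioi' (htail hbx) (htail hy), sub_sub_cancel]

/-- The exponential integral `E₁(r) = ∫_r^∞ e^{-t}/t dt`, which for `r > 0` is `-Ei(-r)`;
`kudlaG a` is a rescaling of `-E₁`. For `r ≤ 0` the integral diverges and `expIntegralE₁ r` is the
junk value `0`. -/
noncomputable def expIntegralE₁ (r : ℝ) : ℝ :=
  ∫ t in Ioi r, Real.exp (-t) / t

lemma integrableOn_exp_neg_div_Ioi {r : ℝ} (hr : 0 < r) :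
    IntegrableOn (fun t : ℝ ↦ Real.exp (-t) / t) (Ioi r) := by
  refine ((integrableOn_exp_neg_Ioi r).div_const r).mono' ?_ ?_
  · exact (by fun_prop : Measurable fun t : ℝ ↦ Real.exp (-t) / t).aestronglyMeasurable
  · filter_upwards [ae_restrict_mem measurableSet_Ioi] with t (hrt : r < t)
    have ht : 0 < t := hr.trans hrt
    rw [Real.norm_of_nonneg (by positivity)]
    gcongr

lemma hasDerivAt_expIntegralE₁ {r : ℝ} (hr : 0 < r) :
    HasDerivAt expIntegralE₁ (-(Real.exp (-r) / r)) r := by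
  have hcont : ContinuousAt (fun t : ℝ ↦ Real.exp (-t) / t) r := by
    fun_prop (disch := exact hr.ne')
  exact hasDerivAt_integral_Ioi (half_lt_self hr)
    (integrableOn_exp_neg_div_Ioi (half_pos hr)) hcont

lemma hasDerivAt_exp_neg_mul_div (c : ℝ) {x : ℝ} (hx : x ≠ 0) :
    HasDerivAt (fun y ↦ Real.exp (-(c * y)) / y)
      (-((1 + c * x) / x * (Real.exp (-(c * x)) / x))) x := by
  have hexp : HasDerivAt (fun y ↦ Real.exp (-(c * y))) (Real.exp (-(c * x)) * -c) x := by
    simpa using ((hasDerivAt_id x).const_mul c).neg.exp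
  refine (hexp.div (hasDerivAt_id x) hx).congr_deriv ?_
  simp only [id]
  field_simp
  ring

section kudlaG

variable {a R : ℝ}

lemma kudlaG_eq_neg_expIntegralE₁ (a R : ℝ) :
    kudlaG a R = -expIntegralE₁ (2 * Real.pi * a * R) :=
  rfl

lemma hasDerivAt_kudlaG (haR : 0 < a * R) :
    HasDerivAt (kudlaG a) (Real.exp (-(2 * Real.pi * a * R)) / R) R := by
  have hpos : 0 < 2 * Real.pi * a * R := by
    simpa only [mul_assoc] using mul_pos Real.two_pi_pos haR
  have hlin : HasDerivAt (fun x ↦ 2 * Real.pi * a * x) (2 * Real.pi * a) R := by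
    simpa using (hasDerivAt_id R).const_mul (2 * Real.pi * a)
  have ha : a ≠ 0 := left_ne_zero_of_mul haR.ne'
  have hR : R ≠ 0 := right_ne_zero_of_mul haR.ne'
  rw [funext (kudlaG_eq_neg_expIntegralE₁ a)]
  refine ((hasDerivAt_expIntegralE₁ hpos).comp R hlin).neg.congr_deriv ?_
  field_simp

lemma deriv_kudlaG (haR : 0 < a * R) :
    deriv (kudlaG a) R = Real.exp (-(2 * Real.pi * a * R)) / R :=
  (hasDerivAt_kudlaG haR).deriv

lemma hasDerivAt_deriv_kudlaG (haR : 0 < a * R) :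
    HasDerivAt (deriv (kudlaG a)) (-((1 + 2 * Real.pi * a * R) / R * deriv (kudlaG a) R)) R := by
  rw [deriv_kudlaG haR]
  have hnhds : ∀ᶠ x in 𝓝 R, 0 < a * x :=
    (continuous_const_mul a).continuousAt.eventually_const_lt haR
  refine (hasDerivAt_exp_neg_mul_div (2 * Real.pi * a)
    (right_ne_zero_of_mul haR.ne')).congr_of_eventuallyEq ?_
  filter_upwards [hnhds] with x hx using deriv_kudlaG hx

lemma mul_deriv_deriv_kudlaG (haR : 0 < a * R) :
    R * deriv (deriv (kudlaG a)) R = -(1 + 2 * Real.pi * a * R) * deriv (kudlaG a) R := by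
  have hR : R ≠ 0 := right_ne_zero_of_mul haR.ne'
  rw [(hasDerivAt_deriv_kudlaG haR).deriv]
  field_simp

lemma kudlaG_radial_identity (haR : 0 < a * R) (α s₀ : ℝ) :
    R * (α + R) * deriv (deriv (kudlaG a)) R + (α + (s₀ + 1) * R) * deriv (kudlaG a) R
      = (s₀ - 2 * Real.pi * a * (α + R)) * Real.exp (-(2 * Real.pi * a * R)) := by
  have hR : R ≠ 0 := right_ne_zero_of_mul haR.ne'
  calc R * (α + R) * deriv (deriv (kudlaG a)) R + (α + (s₀ + 1) * R) * deriv (kudlaG a) R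
      = (α + R) * (R * deriv (deriv (kudlaG a)) R)
          + (α + (s₀ + 1) * R) * deriv (kudlaG a) R := by ring
    _ = (s₀ - 2 * Real.pi * a * (α + R)) * (R * deriv (kudlaG a) R) := by
      rw [mul_deriv_deriv_kudlaG haR]
      ring
    _ = (s₀ - 2 * Real.pi * a * (α + R)) * Real.exp (-(2 * Real.pi * a * R)) := by
      rw [deriv_kudlaG haR, mul_div_cancel₀ _ hR]

end kudlaG

theorem stmt10_general {a R : ℝ} (haR : 0 < a * R) (α s₀ : ℝ) :
    DifferentiableAt ℝ (kudlaG a) R ∧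
    DifferentiableAt ℝ (deriv (kudlaG a)) R ∧
    R * (α + R) * deriv (deriv (kudlaG a)) R + (α + (s₀ + 1) * R) * deriv (kudlaG a) R
      = (s₀ - 2 * Real.pi * a * (α + R)) * Real.exp (-(2 * Real.pi * a * R)) :=
  ⟨(hasDerivAt_kudlaG haR).differentiableAt, (hasDerivAt_deriv_kudlaG haR).differentiableAt,
    kudlaG_radial_identity haR α s₀⟩

/-- For `a > 0` and real parameters `α, s₀`, the function `g(R) = Ei(-2πaR)` is
twice differentiable on `(0,∞)` and satisfies the radial differential identity
`R(α+R)·g'' + (α+(s₀+1)R)·g' = (s₀ - 2πa(α+R))·e^{-2πaR}`. -/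
theorem stmt10 (a : ℝ) (ha : 0 < a) (α s₀ : ℝ) :
    (∀ R : ℝ, 0 < R → DifferentiableAt ℝ (kudlaG a) R) ∧
    (∀ R : ℝ, 0 < R → DifferentiableAt ℝ (deriv (kudlaG a)) R) ∧
    (∀ R : ℝ, 0 < R →
      R * (α + R) * deriv (deriv (kudlaG a)) R
          + (α + (s₀ + 1) * R) * deriv (kudlaG a) R
        = (s₀ - 2 * Real.pi * a * (α + R)) * Real.exp (-(2 * Real.pi * a * R))) :=
  ⟨fun _ hR ↦ (stmt10_general (mul_pos ha hR) α s₀).1,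
    fun _ hR ↦ (stmt10_general (mul_pos ha hR) α s₀).2.1,
    fun _ hR ↦ (stmt10_general (mul_pos ha hR) α s₀).2.2⟩
end

section
/- Let F be a field, σ : F → F a ring automorphism with σ ∘ σ = id, and n ≥ 1. Let γ be an n×n matrix over F such that γ · γ^σ = 1, where γ^σ denotes the matrix obtained by applying σ to each entry of γ. Then γ is invertible, its characteristic polynomial α := charpoly(γ) is monic of degree n with α(0) ≠ 0, and α satisfies α = α(0) · reverse(α^σ); equivalently, α(t) = α(0) · tⁿ · (α^σ)(t⁻¹), i.e. α lies in F[t]°_{deg n}. -/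
open Polynomial

/-!
If `A * B = 1` then `t - A = (-A) * (1 - t * B)`, so taking determinants gives
`charpoly A = det (-A) * det (1 - t * B)`, where `det (-A)` is the value of `charpoly A` at `0`
and `det (1 - t * B)` is the reverse of `charpoly B`. Now take `A = γ` and `B = γ^σ`, and use that
`charpoly (γ^σ) = (charpoly γ)^σ`.
-/

section InversePairs

variable {R ι : Type*} [CommRing R] [Fintype ι] [DecidableEq ι]

lemma charpoly_eval_zero (A : Matrix ι ι R) : A.charpoly.eval 0 = (-A).det := by
  simp [Matrix.eval_charpoly]

variable {A B : Matrix ι ι R}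

lemma isUnit_charpoly_eval_zero (hA : IsUnit A) : IsUnit (A.charpoly.eval 0) := by
  rw [charpoly_eval_zero]
  exact (Matrix.isUnit_iff_isUnit_det _).mp hA.neg

lemma charmatrix_eq_neg_map_mul_of_mul_eq_one (h : A * B = 1) :
    A.charmatrix = (-A).map C * (1 - (X : R[X]) • B.map C) := by
  have hC : A.map C * B.map C = 1 := by
    rw [← Matrix.map_mul, h, Matrix.map_one C C_0 C_1]
  have hneg : (-A).map C = -A.map C := Matrix.map_neg C (map_neg C) A
  calc
    A.charmatrix = (X : R[X]) • 1 - A.map C := by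
      rw [Matrix.charmatrix, Matrix.scalar_apply, Matrix.smul_one_eq_diagonal,
        RingHom.mapMatrix_apply]
    _ = (-A).map C * (1 - (X : R[X]) • B.map C) := by
      rw [hneg, mul_sub, mul_one, mul_smul_comm, neg_mul, hC, smul_neg, sub_neg_eq_add,
        neg_add_eq_sub]

lemma charpoly_eq_C_eval_zero_mul_reverse_of_mul_eq_one (h : A * B = 1) :
    A.charpoly = C (A.charpoly.eval 0) * B.charpoly.reverse := by
  have hdet : ((-A).map C).det = C (A.charpoly.eval 0) := by
    rw [charpoly_eval_zero, RingHom.map_det, RingHom.mapMatrix_apply]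
  calc
    A.charpoly = ((-A).map C).det * B.charpolyRev := by
      rw [Matrix.charpoly, charmatrix_eq_neg_map_mul_of_mul_eq_one h, Matrix.det_mul,
        Matrix.charpolyRev]
    _ = C (A.charpoly.eval 0) * B.charpoly.reverse := by
      rw [hdet, Matrix.reverse_charpoly]

end InversePairs

theorem stmt12_general {R ι : Type*} [CommRing R] [Nontrivial R] [Fintype ι] [DecidableEq ι]
    (σ : R →+* R) (γ : Matrix ι ι R) (hγ : γ * γ.map σ = 1) :
    IsUnit γ ∧ γ.charpoly.Monic ∧ γ.charpoly.natDegree = Fintype.card ι ∧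
      IsUnit (γ.charpoly.eval 0) ∧
      γ.charpoly = C (γ.charpoly.eval 0) * (γ.charpoly.map σ).reverse := by
  have hunit : IsUnit γ := .of_mul_eq_one _ hγ
  refine ⟨hunit, γ.charpoly_monic, γ.charpoly_natDegree_eq_dim, isUnit_charpoly_eval_zero hunit, ?_⟩
  rw [← Matrix.charpoly_map]
  exact charpoly_eq_C_eval_zero_mul_reverse_of_mul_eq_one hγ

/-- Let `σ` be an involutive ring automorphism of a field `F` and let `γ` be an
`n×n` matrix with `γ·γ^σ = 1`.  Then `γ` is invertible and its characteristic
polynomial `α` is monic of degree `n`, has `α(0) ≠ 0`, and satisfies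
`α = α(0)·reverse(α^σ)`, i.e. `α ∈ F[t]°_{deg n}`. -/
theorem stmt12 (F : Type*) [Field F] (σ : F ≃+* F) (hσ : ∀ x, σ (σ x) = x)
    (n : ℕ) (hn : 1 ≤ n) (γ : Matrix (Fin n) (Fin n) F)
    (hγ : γ * γ.map σ = 1) :
    IsUnit γ ∧ γ.charpoly.Monic ∧ γ.charpoly.natDegree = n ∧
      γ.charpoly.eval 0 ≠ 0 ∧
      γ.charpoly
        = Polynomial.C (γ.charpoly.eval 0) * (γ.charpoly.map (σ : F →+* F)).reverse := by
  simpa only [Fintype.card_fin, isUnit_iff_ne_zero] using stmt12_general (σ : F →+* F) γ hγ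
end

section
/- Let F be a field, σ : F → F a ring automorphism with σ ∘ σ = id, and n ≥ 1. Let J be an invertible n×n matrix over F that is σ-hermitian, i.e. (J^σ)ᵀ = J, where J^σ denotes entrywise application of σ and ᵀ denotes transpose. Let g be an n×n matrix over F with (g^σ)ᵀ · J · g = J. Then g is invertible, its characteristic polynomial α := charpoly(g) is monic of degree n with α(0) ≠ 0, and α satisfies α = α(0) · reverse(α^σ); equivalently, α(t) = α(0) · tⁿ · (α^σ)(t⁻¹), i.e. α lies in F[t]°_{deg n}. -/
open Polynomial Matrix

/-! An isometry `g` of the form `J` satisfies `h * J * g = J` with `h = (g^σ)ᵀ`, that is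
`J * g⁻¹ = h * J`. Cancelling `det J`, the matrices `g⁻¹` and `h` have the same characteristic
polynomial, which is `α^σ` for `α` that of `g`. On the other hand, inverting a matrix reverses its
characteristic polynomial and divides it by its constant term. -/

section Charpoly

variable {R ι : Type*} [CommRing R] [Fintype ι] [DecidableEq ι]

theorem isUnit_eval_zero_charpoly_iff {A : Matrix ι ι R} :
    IsUnit (A.charpoly.eval 0) ↔ IsUnit A := by
  rw [eval_charpoly, map_zero, zero_sub, ← isUnit_iff_isUnit_det, IsUnit.neg_iff]

theorem charpoly_eq_of_mul_eq_mul {J A B : Matrix ι ι R} (hJ : IsRegular J.det)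
    (h : J * A = B * J) : A.charpoly = B.charpoly := by
  have hchar : J.map C * A.charmatrix = B.charmatrix * J.map C := by
    have hC : J.map C * A.map C = B.map C * J.map C := by
      rw [← Matrix.map_mul, h, Matrix.map_mul]
    simp only [charmatrix, RingHom.mapMatrix_apply, mul_sub, sub_mul, hC,
      (scalar_commute X (Commute.all X) (J.map C)).eq]
  have hdet : C J.det * A.charpoly = C J.det * B.charpoly := by
    have hdetC : (J.map C).det = C J.det := (RingHom.map_det C J).symm
    simpa only [charpoly, det_mul, hdetC, mul_comm B.charmatrix.det] using congrArg det hchar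
  ext k
  apply hJ.left
  simpa only [coeff_C_mul] using congrArg (coeff · k) hdet

theorem charpoly_eq_C_mul_reverse_of_mul_eq_one {A B : Matrix ι ι R}
    (h : A * B = 1) : A.charpoly = C (A.charpoly.eval 0) * B.charpoly.reverse := by
  have hinv : A.charpoly = C ((-1) ^ Fintype.card ι * Ring.inverse B.det) * B.charpolyRev := by
    rw [← inv_eq_left_inv h, charpoly_inv B (.of_mul_eq_one_right A h)]
    simp only [map_mul, map_pow, map_neg, map_one]
  have heval : A.charpoly.eval 0 = (-1) ^ Fintype.card ι * Ring.inverse B.det := by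
    rw [hinv, eval_C_mul, eval_charpolyRev, mul_one]
  rw [heval, hinv, reverse_charpoly]

theorem isUnit_of_mul_mul_eq {J g h : Matrix ι ι R} (hJ : IsRegular J.det)
    (hg : h * J * g = J) : IsUnit g := by
  have hdet : J.det * (h.det * g.det) = J.det * 1 := by
    rw [mul_one, mul_left_comm, ← mul_assoc, ← det_mul, ← det_mul, hg]
  exact (isUnit_iff_isUnit_det g).mpr (.of_mul_eq_one_right _ (hJ.left hdet))

theorem charpoly_eq_C_mul_reverse_of_mul_mul_eq {J g h : Matrix ι ι R}
    (hJ : IsRegular J.det) (hg : h * J * g = J) :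
    g.charpoly = C (g.charpoly.eval 0) * h.charpoly.reverse := by
  obtain ⟨u, rfl⟩ := isUnit_of_mul_mul_eq hJ hg
  have hinv : J * (↑u⁻¹ : Matrix ι ι R) = h * J := (Units.eq_mul_inv_iff_mul_eq u).mpr hg |>.symm
  rw [← charpoly_eq_of_mul_eq_mul hJ hinv]
  exact charpoly_eq_C_mul_reverse_of_mul_eq_one u.mul_inv

theorem stmt13_general [Nontrivial R] (σ : R →+* R) {J g : Matrix ι ι R}
    (hJ : IsRegular J.det) (hg : (g.map σ)ᵀ * J * g = J) :
    IsUnit g ∧ g.charpoly.Monic ∧ g.charpoly.natDegree = Fintype.card ι ∧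
      IsUnit (g.charpoly.eval 0) ∧
      g.charpoly = C (g.charpoly.eval 0) * (g.charpoly.map σ).reverse := by
  have hunit : IsUnit g := isUnit_of_mul_mul_eq hJ hg
  refine ⟨hunit, g.charpoly_monic, g.charpoly_natDegree_eq_dim,
    isUnit_eval_zero_charpoly_iff.mpr hunit, ?_⟩
  rw [← charpoly_map, ← charpoly_transpose (g.map σ)]
  exact charpoly_eq_C_mul_reverse_of_mul_mul_eq hJ hg

end Charpoly

/-- Let `σ` be an involutive ring automorphism of a field `F`, let `J` be an
invertible σ-hermitian `n×n` matrix (`(J^σ)ᵀ = J`), and let `g` satisfy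
`(g^σ)ᵀ·J·g = J` (i.e. `g` is an isometry of the hermitian form with Gram
matrix `J`).  Then `g` is invertible and its characteristic polynomial `α` is
monic of degree `n`, has `α(0) ≠ 0`, and satisfies `α = α(0)·reverse(α^σ)`,
i.e. `α ∈ F[t]°_{deg n}`. -/
theorem stmt13 (F : Type*) [Field F] (σ : F ≃+* F) (hσ : ∀ x, σ (σ x) = x)
    (n : ℕ) (hn : 1 ≤ n) (J g : Matrix (Fin n) (Fin n) F)
    (hJ : IsUnit J) (hJherm : (J.map σ)ᵀ = J)
    (hg : (g.map σ)ᵀ * J * g = J) :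
    IsUnit g ∧ g.charpoly.Monic ∧ g.charpoly.natDegree = n ∧
      g.charpoly.eval 0 ≠ 0 ∧
      g.charpoly
        = Polynomial.C (g.charpoly.eval 0) * (g.charpoly.map (σ : F →+* F)).reverse := by
  simpa only [isUnit_iff_ne_zero, Fintype.card_fin] using
    stmt13_general (σ : F →+* F) ((isUnit_iff_isUnit_det J).mp hJ).isRegular hg
end

section
/- Let F be a field, σ : F → F a ring automorphism with σ ∘ σ = id, and let α ∈ F[t] be a monic irreducible polynomial of degree n ≥ 1 with α(0) ≠ 0 satisfying α = α(0) · reverse(α^σ), where α^σ is obtained by applying σ to the coefficients and reverse(p) = tⁿ·p(t⁻¹). Let E := F[t]/(α) be the quotient field and let θ denote the image of t in E (so θ ≠ 0, hence θ is invertible in E). Then there exists a ring automorphism τ : E → E such that τ(ι(x)) = ι(σ(x)) for all x ∈ F (where ι : F → E is the canonical embedding) and τ(θ) = θ⁻¹; moreover τ ∘ τ = id. -/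
open Polynomial

/-!
Since `α(0)` is a unit, the relation `α(θ) = 0` exhibits an inverse of `θ`. As `α` divides the
reverse of `α^σ`, that reverse vanishes at `θ`, so `α^σ` vanishes at `θ⁻¹`. Hence `σ` extends to
`R[t]/(α)` by `θ ↦ θ⁻¹`, and the square of this extension fixes both `R` and `θ`.
-/

section CommRing

open AdjoinRoot

variable {R S : Type*} [CommRing R] [CommRing S]

theorem isUnit_of_eval₂_eq_zero {A : Type*} [Semiring A] {i : A →+* S} {p : A[X]} {x : S}
    (hp : IsUnit (p.coeff 0)) (hx : p.eval₂ i x = 0) : IsUnit x := by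
  have hconst : p.divX.eval₂ i x * x = -i (p.coeff 0) := by
    rw [← p.divX_mul_X_add, eval₂_add, eval₂_mul_X, eval₂_C] at hx
    exact eq_neg_of_add_eq_zero_left hx
  exact isUnit_of_mul_isUnit_right (hconst ▸ (hp.map i).neg)

theorem exists_adjoinRoot_ringHom_of_dvd_reverse_map {σ : R →+* S} {p : R[X]} {q : S[X]}
    (hq : IsUnit (q.coeff 0)) (hdvd : q ∣ (p.map σ).reverse) :
    ∃ τ : AdjoinRoot p →+* AdjoinRoot q,
      (∀ x, τ (of p x) = of q (σ x)) ∧ τ (root p) * root q = 1 := by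
  obtain ⟨y, hy⟩ := (isUnit_of_eval₂_eq_zero hq (eval₂_root q)).exists_left_inv
  have hrev : (p.map σ).reverse.eval₂ (of q) (root q) = 0 :=
    eval₂_eq_zero_of_dvd_of_eval₂_eq_zero _ _ hdvd (eval₂_root q)
  have hroot : p.eval₂ ((of q).comp σ) y = 0 := by
    let _ : Invertible y := ⟨root q, (mul_comm _ _).trans hy, hy⟩
    rw [← eval₂_map]
    exact (eval₂_reverse_eq_zero_iff (of q) y (p.map σ)).mp hrev
  exact ⟨lift _ y hroot, fun _ ↦ lift_of hroot, by rwa [lift_root hroot]⟩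

theorem involutive_of_map_root_mul_root_eq_one {σ : R → R} (hσ : Function.Involutive σ) {p : R[X]}
    {τ : AdjoinRoot p →+* AdjoinRoot p} (hof : ∀ x, τ (of p x) = of p (σ x))
    (hroot : τ (root p) * root p = 1) : Function.Involutive τ := by
  have hroot_root : τ (τ (root p)) = root p :=
    left_inv_eq_right_inv (by rw [← map_mul, hroot, map_one]) hroot
  have hcomp : τ.comp τ = RingHom.id _ := by
    refine ringHom_ext (RingHom.ext fun x ↦ ?_) hroot_root
    simp only [RingHom.comp_apply, RingHom.id_apply, hof, hσ x]
  exact RingHom.congr_fun hcomp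

theorem stmt14_general (σ : R →+* R) (hσ : ∀ x, σ (σ x) = x) {α : R[X]}
    (h0 : IsUnit (α.eval 0)) (hsym : α = C (α.eval 0) * (α.map σ).reverse) :
    ∃ τ : AdjoinRoot α ≃+* AdjoinRoot α,
      (∀ x, τ (of α x) = of α (σ x)) ∧ τ (root α) * root α = 1 ∧ ∀ y, τ (τ y) = y := by
  have hdvd : α ∣ (α.map σ).reverse := (h0.map C).dvd_mul_left.mp hsym.dvd
  obtain ⟨τ, hof, hroot⟩ :=
    exists_adjoinRoot_ringHom_of_dvd_reverse_map (coeff_zero_eq_eval_zero α ▸ h0) hdvd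
  have hτ : Function.Involutive τ := involutive_of_map_root_mul_root_eq_one hσ hof hroot
  exact ⟨{ τ with invFun := τ, left_inv := hτ, right_inv := hτ }, hof, hroot, hτ⟩

end CommRing

/-- Let `σ` be an involutive ring automorphism of a field `F` and let
`α ∈ F[t]` be monic irreducible of degree `n ≥ 1` with `α(0) ≠ 0` and
`α = α(0)·reverse(α^σ)` (i.e. `α ∈ F[t]°_{deg n}`).  Then on the quotient field
`E = F[t]/(α)` there is a ring automorphism `τ` extending `σ`, sending the
distinguished root `θ` of `α` to `θ⁻¹`, and satisfying `τ ∘ τ = id`. -/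
theorem stmt14 (F : Type*) [Field F] (σ : F ≃+* F) (hσ : ∀ x, σ (σ x) = x)
    (n : ℕ) (hn : 1 ≤ n) (α : Polynomial F) [Fact (Irreducible α)]
    (hmonic : α.Monic) (hdeg : α.natDegree = n) (h0 : α.eval 0 ≠ 0)
    (hsym : α = Polynomial.C (α.eval 0) * (α.map (σ : F →+* F)).reverse) :
    ∃ τ : AdjoinRoot α ≃+* AdjoinRoot α,
      (∀ x : F, τ (AdjoinRoot.of α x) = AdjoinRoot.of α (σ x)) ∧
      τ (AdjoinRoot.root α) = (AdjoinRoot.root α)⁻¹ ∧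
      (∀ y, τ (τ y) = y) := by
  obtain ⟨τ, hof, hroot, hτ⟩ := stmt14_general (σ : F →+* F) hσ h0.isUnit hsym
  exact ⟨τ, hof, eq_inv_of_mul_eq_one_left hroot, hτ⟩
end
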